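/- For every integer k ≥ 2 there exist ε₀ > 0, c > 0 and λ₀ ≥ 1 such that for every 0 < ε ≤ ε₀, every λ ≥ λ₀, every θ ∈ [0, 1/100], every w ∈ [1/4, 3/4], and every x ∈ Ω(θ, w; λ, ε), one has |∫_{[0,1]²} e(P(ξ; x)) dξ| ≥ c/λ. -/

import Mathlib

open MeasureTheory Real Set
open scoped ENNReal

noncomputable section

/-- Index set for multi-indices `β = (β₁, β₂) ∈ ℕ²` with `1 ≤ β₁ + β₂ ≤ k`;
its cardinality is `N = (k+1)(k+2)/2 − 1`. -/
def Idx (k : ℕ) : Type :=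
  {β : Fin (k + 1) × Fin (k + 1) // 1 ≤ (β.1 : ℕ) + (β.2 : ℕ) ∧ (β.1 : ℕ) + (β.2 : ℕ) ≤ k}

instance (k : ℕ) : Fintype (Idx k) := by unfold Idx; infer_instance

/-- The phase polynomial `P(ξ; x) = ∑_{1 ≤ |β| ≤ k} x_β ξ₁^{β₁} ξ₂^{β₂}`. -/
def Pphase (k : ℕ) (x : Idx k → ℝ) (ξ : Fin 2 → ℝ) : ℝ :=
  ∑ β : Idx k, x β * ξ 0 ^ (β.1.1 : ℕ) * ξ 1 ^ (β.1.2 : ℕ)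

/-- `E_k1(x) = ∫_{[0,1]²} e(P(ξ; x)) dξ` with `e(t) = exp(2πit)`. -/
def Eone (k : ℕ) (x : Idx k → ℝ) : ℂ :=
  ∫ ξ in Icc (0 : Fin 2 → ℝ) 1, Complex.exp (2 * Real.pi * Complex.I * (Pphase k x ξ))

/-- The index `β = (k, 0)`, so that `x₁ = x_{(k,0)}` is the coefficient of `ξ₁^k`. -/
def idxTop (k : ℕ) (hk : 1 ≤ k) : Idx k :=
  ⟨(⟨k, Nat.lt_succ_self k⟩, ⟨0, Nat.succ_pos k⟩), by constructor <;> simp [hk]⟩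

/-- `γ_{k′}(·; x, θ, w)`: the coefficient of `u^{k′}` in the polynomial
`u ↦ P(u − θξ₂ + w, ξ₂; x)`, as a polynomial in `ξ₂` (of degree ≤ k − k′);
equivalently, `P(ξ₁, ξ₂; x) = Σ_{k′=0}^{k} γ_{k′}(ξ₂; x, θ, w) (ξ₁ + θξ₂ − w)^{k′}`.
We work in `ℝ[S][U]`, with `U` the outer variable (standing for `ξ₁ + θξ₂ − w`)
and `S` the inner one (standing for `ξ₂`). -/
def gam (k : ℕ) (x : Idx k → ℝ) (θ w : ℝ) (k' : ℕ) : Polynomial ℝ :=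
  Polynomial.coeff
    (∑ β : Idx k, Polynomial.C (Polynomial.C (x β)) *
      (Polynomial.X - Polynomial.C (Polynomial.C θ * Polynomial.X - Polynomial.C w))
          ^ (β.1.1 : ℕ) *
      Polynomial.C (Polynomial.X ^ (β.1.2 : ℕ)))
    k'

/-- `‖γ‖`, the sum of the absolute values of the coefficients of a real polynomial. -/
def norm1 (γ : Polynomial ℝ) : ℝ := ∑ i ∈ γ.support, |γ.coeff i|

/-- The set `Ω(θ, w; λ, ε)` of (6.4):
`{x : λ^k ≤ x₁ ≤ (2λ)^k, ‖γ_{k′}(·;x,θ,w)‖ ≤ ε λ^{k′} (1 ≤ k′ ≤ k−1),`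
`‖γ₀(·;x,θ,w) − γ₀(0;x,θ,w)‖ ≤ ε}`. -/
def Omegaset (k : ℕ) (hk : 1 ≤ k) (θ w lam ε : ℝ) : Set (Idx k → ℝ) :=
  {x | lam ^ k ≤ x (idxTop k hk) ∧ x (idxTop k hk) ≤ (2 * lam) ^ k ∧
    (∀ k' : ℕ, 1 ≤ k' → k' ≤ k - 1 → norm1 (gam k x θ w k') ≤ ε * lam ^ k') ∧
    norm1 (gam k x θ w 0 -
      Polynomial.C (Polynomial.eval 0 (gam k x θ w 0))) ≤ ε}

/-- The boundary term produced by integrating `cos (2 π s ^ (n + 1))` by parts twice. -/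
def cosBoundary (n : ℕ) (s : ℝ) : ℝ :=
  sin (2 * π * s ^ (n + 1)) / (2 * π * (n + 1) * s ^ n) +
    n * (1 - cos (2 * π * s ^ (n + 1))) / ((2 * π * (n + 1)) ^ 2 * s ^ (2 * n + 1))

lemma hasDerivAt_cosBoundary (n : ℕ) {s : ℝ} (hs : 0 < s) :
    HasDerivAt (cosBoundary n) (cos (2 * π * s ^ (n + 1)) -
      n * (2 * n + 1) * (1 - cos (2 * π * s ^ (n + 1))) /
        ((2 * π * (n + 1)) ^ 2 * s ^ (2 * n + 2))) s := by
  have hpi := Real.pi_pos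
  have hp : HasDerivAt (fun s : ℝ => 2 * π * s ^ (n + 1)) (2 * π * ((n + 1) * s ^ n)) s := by
    simpa using (hasDerivAt_pow (n + 1) s).const_mul (2 * π)
  have hn : HasDerivAt (fun s : ℝ => s ^ n) (n * s ^ (n - 1)) s := hasDerivAt_pow n s
  have hm : HasDerivAt (fun s : ℝ => s ^ (2 * n + 1)) ((2 * n + 1) * s ^ (2 * n)) s := by
    simpa using hasDerivAt_pow (2 * n + 1) s
  have h1 := (hp.sin).div (hn.const_mul (2 * π * (n + 1))) (by positivity)
  have h2 := ((hp.cos.const_sub 1).const_mul (n : ℝ)).div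
    (hm.const_mul ((2 * π * (n + 1)) ^ 2)) (by positivity)
  refine (h1.add h2).congr_deriv ?_
  have e1 : (n : ℝ) * s ^ (n - 1) = n * s ^ n / s := by
    rcases n with _ | n
    · simp
    · field_simp
      simp
      ring
  rw [e1]
  generalize sin (2 * π * s ^ (n + 1)) = a
  generalize cos (2 * π * s ^ (n + 1)) = b
  have e2 : s ^ (2 * n) = (s ^ n) ^ 2 := by ring
  have e3 : s ^ (2 * n + 1) = (s ^ n) ^ 2 * s := by ring
  have e4 : s ^ (2 * n + 2) = (s ^ n) ^ 2 * s ^ 2 := by ring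
  rw [e2, e3, e4]
  have ht : s ^ n ≠ 0 := by positivity
  generalize s ^ n = t at *
  field_simp
  ring

lemma abs_cosBoundary_le (n : ℕ) {s : ℝ} (hs : 0 ≤ s) : |cosBoundary n s| ≤ 2 * s := by
  rcases hs.eq_or_lt with rfl | hs
  · simp [cosBoundary]
  have hpi := Real.pi_pos
  have hx : 0 ≤ 2 * π * s ^ (n + 1) := by positivity
  have h1 : |sin (2 * π * s ^ (n + 1)) / (2 * π * (n + 1) * s ^ n)| ≤ s := by
    rw [abs_div, abs_of_pos (a := 2 * π * (n + 1) * s ^ n) (by positivity),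
      div_le_iff₀ (by positivity)]
    have := Real.abs_sin_le_abs (x := 2 * π * s ^ (n + 1))
    rw [abs_of_nonneg hx] at this
    refine this.trans ?_
    have : 0 ≤ (n : ℝ) * (2 * π * s ^ (n + 1)) := by positivity
    have e : s * (2 * π * (n + 1) * s ^ n) =
      2 * π * s ^ (n + 1) + n * (2 * π * s ^ (n + 1)) := by ring
    linarith
  have h2 : |n * (1 - cos (2 * π * s ^ (n + 1))) /
      ((2 * π * (n + 1)) ^ 2 * s ^ (2 * n + 1))| ≤ s := by
    have hc := Real.one_sub_sq_div_two_le_cos (x := 2 * π * s ^ (n + 1))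
    have hc' := Real.cos_le_one (2 * π * s ^ (n + 1))
    have hc'' : 0 ≤ 1 - cos (2 * π * s ^ (n + 1)) := by linarith
    rw [abs_of_nonneg (by positivity), div_le_iff₀ (by positivity)]
    have h3 : (n : ℝ) * (1 - cos (2 * π * s ^ (n + 1))) ≤ n * ((2 * π * s ^ (n + 1)) ^ 2) := by
      gcongr
      nlinarith [sq_nonneg (2 * π * s ^ (n + 1))]
    refine h3.trans ?_
    have e : s * ((2 * π * (n + 1)) ^ 2 * s ^ (2 * n + 1)) =
      ((n : ℝ) + 1) ^ 2 * ((2 * π * s ^ (n + 1)) ^ 2) := by ring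
    rw [e]
    gcongr
    nlinarith [(Nat.cast_nonneg n : (0 : ℝ) ≤ n)]
  exact (abs_add_le _ _).trans (by linarith)

lemma neg_one_div_le_cosBoundary {n : ℕ} (hn : 1 ≤ n) {s : ℝ} (hs : 1 ≤ s) :
    -(1 / s) ≤ cosBoundary n s := by
  have hpi := Real.pi_gt_three
  have hs0 : 0 < s := by linarith
  have h2 : 0 ≤ n * (1 - cos (2 * π * s ^ (n + 1))) /
      ((2 * π * (n + 1)) ^ 2 * s ^ (2 * n + 1)) := by
    have hc' := Real.cos_le_one (2 * π * s ^ (n + 1))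
    apply div_nonneg
    · apply mul_nonneg (by positivity)
      linarith
    · positivity
  have h1 : |sin (2 * π * s ^ (n + 1)) / (2 * π * (n + 1) * s ^ n)| ≤ 1 / s := by
    rw [abs_div, abs_of_pos (a := 2 * π * (n + 1) * s ^ n) (by positivity)]
    have hsn : s ≤ s ^ n := le_self_pow₀ hs (by omega)
    apply div_le_div₀ zero_le_one (Real.abs_sin_le_one _) hs0
    have : (0 : ℝ) ≤ n := by positivity
    have : 1 ≤ 2 * π * (n + 1) := by nlinarith
    nlinarith
  have := (abs_le.mp h1).1
  unfold cosBoundary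
  linarith

/-- The truncations of the Fresnel-type integral of `cos (2 π s ^ (n + 1))` over the half-line
are bounded below by a positive constant, up to an error that tends to zero. -/
lemma exists_le_integral_cos_pow {n : ℕ} (hn : 1 ≤ n) :
    ∃ c > 0, ∀ V : ℝ, 1 ≤ V → c - 1 / V ≤ ∫ s in (0 : ℝ)..V, cos (2 * π * s ^ (n + 1)) := by
  have hpi := Real.pi_pos
  have hcont : Continuous fun s : ℝ => cos (2 * π * s ^ (n + 1)) := by fun_prop
  set N : ℝ → ℝ := fun V => (∫ s in (0 : ℝ)..V, cos (2 * π * s ^ (n + 1))) - cosBoundary n V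
    with hN
  have hder : ∀ s : ℝ, 0 < s → HasDerivAt N (n * (2 * n + 1) * (1 - cos (2 * π * s ^ (n + 1))) /
        ((2 * π * (n + 1)) ^ 2 * s ^ (2 * n + 2))) s := by
    intro s hs
    have := (intervalIntegral.integral_hasDerivAt_right (hcont.intervalIntegrable 0 s)
      (hcont.stronglyMeasurableAtFilter _ _) hcont.continuousAt).sub (hasDerivAt_cosBoundary n hs)
    exact this.congr_deriv (by ring)
  have hnR : (0 : ℝ) < n := by exact_mod_cast hn
  have hN0 : N 0 = 0 := by simp [hN, cosBoundary]
  have hcN : ContinuousOn N (Ici 0) := by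
    intro s hs
    rcases (mem_Ici.mp hs).eq_or_lt with rfl | hs
    · have h1 : ContinuousWithinAt (cosBoundary n) (Ici 0) 0 := by
        have h0 : cosBoundary n 0 = 0 := by simp [cosBoundary]
        rw [ContinuousWithinAt, h0]
        apply squeeze_zero_norm' (a := fun s => 2 * s)
        · filter_upwards [self_mem_nhdsWithin] with s hs
          exact abs_cosBoundary_le n hs
        · have : ContinuousWithinAt (fun s : ℝ => 2 * s) (Ici 0) 0 := by fun_prop
          simpa [ContinuousWithinAt] using this
      exact (intervalIntegral.continuous_primitive
        (fun a b => hcont.intervalIntegrable a b) 0).continuousWithinAt.sub h1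
    · exact (hder s hs).continuousAt.continuousWithinAt
  have hmono : MonotoneOn N (Ici 0) := by
    apply monotoneOn_of_deriv_nonneg (convex_Ici 0) hcN
    · intro s hs
      rw [interior_Ici] at hs
      exact (hder s hs).differentiableAt.differentiableWithinAt
    · intro s hs
      rw [interior_Ici] at hs
      rw [(hder s hs).deriv]
      have hc' := Real.cos_le_one (2 * π * s ^ (n + 1))
      have hs' : 0 < s := hs
      apply div_nonneg
      · apply mul_nonneg (by positivity)
        linarith
      · positivity
  have hstrict : StrictMonoOn N (Icc 0 1) := by
    apply strictMonoOn_of_deriv_pos (convex_Icc 0 1) (hcN.mono Icc_subset_Ici_self)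
    intro s hs
    rw [interior_Icc] at hs
    rw [(hder s hs.1).deriv]
    have hs' : 0 < s := hs.1
    have hc : cos (2 * π * s ^ (n + 1)) < 1 := by
      refine lt_of_le_of_ne (Real.cos_le_one _) fun h => ?_
      have h1 : s ^ (n + 1) < 1 := pow_lt_one₀ hs.1.le hs.2 (by omega)
      have h2 : 0 < s ^ (n + 1) := by positivity
      have := (Real.cos_eq_one_iff_of_lt_of_lt (by nlinarith) (by nlinarith)).mp h
      nlinarith
    have : 0 < 1 - cos (2 * π * s ^ (n + 1)) := by linarith
    positivity
  have hpos : 0 < N 1 := hN0 ▸ hstrict (by simp) (by simp) one_pos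
  refine ⟨N 1, hpos, fun V hV => ?_⟩
  have h1 := hmono (a := 1) (b := V) (by simp) (mem_Ici.mpr (by linarith)) hV
  have h2 := neg_one_div_le_cosBoundary hn hV
  have h3 : N V = (∫ s in (0 : ℝ)..V, cos (2 * π * s ^ (n + 1))) - cosBoundary n V := rfl
  linarith

lemma abs_eval_le_of_abs_coeff_le {p : Polynomial ℝ} {d : ℕ} {M V v : ℝ} (hd : p.natDegree ≤ d)
    (hM : ∀ i, |p.coeff i| ≤ M) (hV : 1 ≤ V) (hv : |v| ≤ V) :
    |p.eval v| ≤ (d + 1) * M * V ^ d := by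
  rw [Polynomial.eval_eq_sum_range' (Nat.lt_succ_of_le hd)]
  refine (Finset.abs_sum_le_sum_abs _ _).trans ?_
  have hM0 : 0 ≤ M := (abs_nonneg _).trans (hM 0)
  have : ∀ i ∈ Finset.range (d + 1), |p.coeff i * v ^ i| ≤ M * V ^ d := by
    intro i hi
    rw [abs_mul, abs_pow]
    have h1 : |v| ^ i ≤ V ^ d :=
      (pow_le_pow_left₀ (abs_nonneg v) hv i).trans
        (pow_le_pow_right₀ hV (Nat.lt_succ_iff.mp (Finset.mem_range.mp hi)))
    exact mul_le_mul (hM i) h1 (by positivity) hM0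
  refine (Finset.sum_le_sum this).trans (le_of_eq ?_)
  simp
  ring

lemma abs_coeff_derivative_le {p : Polynomial ℝ} {d : ℕ} {M : ℝ} (hd : p.natDegree ≤ d)
    (hM : ∀ i, |p.coeff i| ≤ M) (i : ℕ) : |p.derivative.coeff i| ≤ d * M := by
  have hM0 : 0 ≤ M := (abs_nonneg _).trans (hM 0)
  rw [Polynomial.coeff_derivative, abs_mul]
  by_cases hi : i + 1 ≤ d
  · have h1 : |(i : ℝ) + 1| ≤ d := by
      rw [abs_of_nonneg (by positivity)]
      exact_mod_cast hi
    rw [mul_comm]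
    exact mul_le_mul h1 (hM _) (abs_nonneg _) (by positivity)
  · rw [Polynomial.coeff_eq_zero_of_natDegree_lt (by omega)]
    simp
    positivity

/-- The character `e(t) = exp(2πit)`. -/
def unitExp (t : ℝ) : ℂ := Complex.exp (2 * Real.pi * Complex.I * t)

lemma norm_unitExp (t : ℝ) : ‖unitExp t‖ = 1 := by
  have : (2 * Real.pi * Complex.I * t : ℂ) = ((2 * Real.pi * t : ℝ) : ℂ) * Complex.I := by
    push_cast
    ring
  rw [unitExp, this, Complex.norm_exp_ofReal_mul_I]

lemma unitExp_add (s t : ℝ) : unitExp (s + t) = unitExp s * unitExp t := by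
  simp only [unitExp, ← Complex.exp_add]
  push_cast
  ring_nf

lemma re_unitExp (t : ℝ) : (unitExp t).re = cos (2 * π * t) := by
  have : (2 * Real.pi * Complex.I * t : ℂ) = ((2 * Real.pi * t : ℝ) : ℂ) * Complex.I := by
    push_cast
    ring
  rw [unitExp, this, Complex.exp_ofReal_mul_I_re]

lemma continuous_unitExp : Continuous unitExp := by
  unfold unitExp
  fun_prop

lemma HasDerivAt.unitExp {f : ℝ → ℝ} {f' v : ℝ} (hf : HasDerivAt f f' v) :
    HasDerivAt (fun v => unitExp (f v)) (unitExp (f v) * (2 * π * Complex.I * f')) v := by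
  exact ((hf.ofReal_comp).const_mul (2 * (π : ℂ) * Complex.I)).cexp

lemma norm_unitExp_add_sub_le (s t : ℝ) : ‖unitExp (s + t) - unitExp s‖ ≤ 2 * π * |t| := by
  have e : (2 * Real.pi * Complex.I * t : ℂ) = Complex.I * ((2 * Real.pi * t : ℝ) : ℂ) := by
    push_cast
    ring
  have h : unitExp (s + t) - unitExp s = unitExp s * (unitExp t - 1) := by
    rw [unitExp_add]
    ring
  rw [h, norm_mul, norm_unitExp, one_mul, unitExp, e]
  refine Real.norm_exp_I_mul_ofReal_sub_one_le.trans (le_of_eq ?_)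
  rw [Real.norm_eq_abs, abs_mul, abs_of_pos (by positivity)]

/-- A first-derivative (van der Corput) estimate on a half-line. -/
lemma norm_integral_unitExp_le {q : Polynomial ℝ} {M V B : ℝ} (hM : 0 ≤ M)
    (h1 : ∀ v : ℝ, 1 ≤ v → v ≤ |q.derivative.eval v|)
    (h2 : ∀ v : ℝ, 1 ≤ v →
      |q.derivative.derivative.eval v| * v ^ 2 ≤ M * (q.derivative.eval v) ^ 2)
    (hV : 1 ≤ V) (hVB : V ≤ B) :
    ‖∫ v in V..B, unitExp (q.eval v)‖ ≤ (M + 2) / V := by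
  have hpi := Real.pi_gt_three
  have hcont : Continuous fun v : ℝ => unitExp (q.eval v) :=
    continuous_unitExp.comp q.continuous
  have hne : ∀ v : ℝ, 1 ≤ v → q.derivative.eval v ≠ 0 := by
    intro v hv h0
    have := h1 v hv
    rw [h0, abs_zero] at this
    linarith
  set g : ℝ → ℂ := fun v => unitExp (q.eval v) / (2 * π * Complex.I * (q.derivative.eval v : ℝ))
    with hg
  have hgn : ∀ v : ℝ, 1 ≤ v → ‖g v‖ ≤ 1 / v := by
    intro v hv
    have h := h1 v hv
    have : ‖(2 * π * Complex.I * (q.derivative.eval v : ℝ) : ℂ)‖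
        = 2 * π * |q.derivative.eval v| := by
      simp [abs_of_pos Real.pi_pos]
    rw [hg, norm_div, norm_unitExp, this]
    apply one_div_le_one_div_of_le (by linarith)
    nlinarith
  have hder : ∀ v : ℝ, 1 ≤ v → HasDerivAt (fun x => (∫ t in V..x, unitExp (q.eval t)) - g x)
      (unitExp (q.eval v) * (q.derivative.derivative.eval v : ℝ) /
        (2 * π * Complex.I * (q.derivative.eval v : ℝ) ^ 2)) v := by
    intro v hv
    have hI : HasDerivAt (fun x => ∫ t in V..x, unitExp (q.eval t)) (unitExp (q.eval v)) v :=
      intervalIntegral.integral_hasDerivAt_right (hcont.intervalIntegrable V v)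
        (hcont.stronglyMeasurableAtFilter _ _) hcont.continuousAt
    have hq := (q.hasDerivAt v).unitExp
    have hq' := ((q.derivative.hasDerivAt v).ofReal_comp).const_mul (2 * (π : ℂ) * Complex.I)
    have hn : ((q.derivative.eval v : ℝ) : ℂ) ≠ 0 := by exact_mod_cast hne v hv
    have hpi' : (π : ℂ) ≠ 0 := by exact_mod_cast Real.pi_ne_zero
    have hz : (2 * π * Complex.I * (q.derivative.eval v : ℝ) : ℂ) ≠ 0 := by
      simp [hpi', hne v hv]
    refine (hI.sub (hq.div hq' hz)).congr_deriv ?_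
    have hI0 := Complex.I_ne_zero
    field_simp
    ring
  have key := image_norm_le_of_norm_deriv_right_le_deriv_boundary'
    (f := fun x => (∫ t in V..x, unitExp (q.eval t)) - g x) (a := V) (b := B)
    (B := fun x => 1 / V + M / V - M / x) (B' := fun x => M / x ^ 2)
    (fun x hx => (hder x (hV.trans hx.1)).continuousAt.continuousWithinAt)
    (fun x hx => (hder x (hV.trans hx.1)).hasDerivWithinAt)
    (by simpa using hgn V hV)
    (fun x hx => by
      have : x ≠ 0 := by linarith [hx.1]
      exact ContinuousAt.continuousWithinAt (by fun_prop (disch := assumption)))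
    (fun x hx => by
      have hx0 : x ≠ 0 := by linarith [hx.1]
      have := ((hasDerivAt_inv hx0).const_mul M).const_sub (1 / V + M / V)
      exact (this.congr_deriv (by field_simp)).hasDerivWithinAt)
    (fun x hx => by
      have hx1 : 1 ≤ x := hV.trans hx.1
      have hp : 0 < (q.derivative.eval x) ^ 2 := by
        have := hne x hx1
        positivity
      have : ‖(2 * π * Complex.I * (q.derivative.eval x : ℝ) ^ 2 : ℂ)‖
          = 2 * π * (q.derivative.eval x) ^ 2 := by
        simp [abs_of_pos Real.pi_pos]
      rw [norm_div, norm_mul, norm_unitExp, this, one_mul, Complex.norm_real, Real.norm_eq_abs,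
        div_le_div_iff₀ (by positivity) (by positivity)]
      refine (h2 x hx1).trans ?_
      gcongr
      nlinarith)
  have hB := key ⟨hVB, le_rfl⟩
  have hgB := hgn B (hV.trans hVB)
  have hV0 : 0 < V := by linarith
  have hBV : 1 / B ≤ 1 / V := one_div_le_one_div_of_le hV0 hVB
  have hMB : 0 ≤ M / B := div_nonneg hM (by linarith)
  have htri := norm_sub_norm_le (∫ t in V..B, unitExp (q.eval t)) (g B)
  have : (M + 2) / V = 1 / V + M / V + 1 / V := by ring
  linarith

/-- The tail of the integral of `e(± v ^ (n + 1) + r(v))`, for a polynomial `r` of degree at most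
`n` with small coefficients. -/
lemma norm_integral_unitExp_pow_add_le {n : ℕ} (hn : 1 ≤ n) {σ : ℝ} (hσ : |σ| = 1)
    {r : Polynomial ℝ} (hr : r.natDegree ≤ n) {ε : ℝ} (hrc : ∀ i, |r.coeff i| ≤ ε)
    (hε : n * ε ≤ 1) {V B : ℝ} (hV : 1 ≤ V) (hVB : V ≤ B) :
    ‖∫ v in V..B, unitExp (σ * v ^ (n + 1) + r.eval v)‖ ≤ (2 * n ^ 2 + n + 2) / V := by
  have hn1 : (1 : ℝ) ≤ n := by exact_mod_cast hn
  set q : Polynomial ℝ := Polynomial.C σ * Polynomial.X ^ (n + 1) + r with hq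
  have hr' : r.derivative.natDegree ≤ n - 1 :=
    (Polynomial.natDegree_derivative_le r).trans (by omega)
  have hr'' : r.derivative.derivative.natDegree ≤ n - 1 :=
    (Polynomial.natDegree_derivative_le _).trans (by omega)
  have hc' := abs_coeff_derivative_le hr hrc
  have hc'' : ∀ i, |r.derivative.derivative.coeff i| ≤ n * (n * ε) :=
    abs_coeff_derivative_le (hr'.trans (by omega)) hc'
  have hcast : ((n - 1 : ℕ) : ℝ) + 1 = n := by
    rw [Nat.cast_sub hn]
    simp
  have hb' : ∀ v : ℝ, 1 ≤ v → |r.derivative.eval v| ≤ n * v ^ (n - 1) := by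
    intro v hv
    have := abs_eval_le_of_abs_coeff_le hr' hc' hv (abs_of_nonneg (by linarith)).le
    rw [hcast] at this
    refine this.trans ?_
    gcongr
    nlinarith
  have hb'' : ∀ v : ℝ, 1 ≤ v → |r.derivative.derivative.eval v| ≤ n ^ 2 * v ^ (n - 1) := by
    intro v hv
    have := abs_eval_le_of_abs_coeff_le hr'' hc'' hv (abs_of_nonneg (by linarith)).le
    rw [hcast] at this
    refine this.trans ?_
    gcongr
    nlinarith [mul_le_mul_of_nonneg_left hε (by positivity : 0 ≤ (n : ℝ) ^ 2)]
  have hq' : ∀ v : ℝ, q.derivative.eval v = σ * ((n + 1) * v ^ n) + r.derivative.eval v := by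
    intro v
    simp [hq]
  have hq'' : ∀ v : ℝ, q.derivative.derivative.eval v =
      σ * ((n + 1) * (n * v ^ (n - 1))) + r.derivative.derivative.eval v := by
    intro v
    simp [hq, Polynomial.derivative_X_pow]
  have hlow : ∀ v : ℝ, 1 ≤ v → v ^ n ≤ |q.derivative.eval v| := by
    intro v hv
    rw [hq']
    have h1 := abs_sub_abs_le_abs_add (σ * ((n + 1) * v ^ n)) (r.derivative.eval v)
    rw [abs_mul, hσ, one_mul, abs_of_nonneg (by positivity)] at h1
    have h2 := hb' v hv
    have h3 : v ^ (n - 1) ≤ v ^ n := pow_le_pow_right₀ hv (by omega)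
    nlinarith [mul_le_mul_of_nonneg_left h3 (by positivity : 0 ≤ (n : ℝ))]
  have := norm_integral_unitExp_le (q := q) (M := 2 * n ^ 2 + n) (by positivity)
    (fun v hv => (le_self_pow₀ hv (by omega)).trans (hlow v hv))
    (fun v hv => by
      have h2 : |q.derivative.derivative.eval v| ≤ (2 * n ^ 2 + n) * v ^ (n - 1) := by
        rw [hq'']
        refine (abs_add_le _ _).trans ?_
        rw [abs_mul, hσ, one_mul, abs_of_nonneg (by positivity)]
        have := hb'' v hv
        nlinarith
      have h3 : v ^ (n - 1) * v ^ 2 ≤ q.derivative.eval v ^ 2 := by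
        rw [← sq_abs (q.derivative.eval v)]
        refine le_trans ?_ (pow_le_pow_left₀ (by positivity) (hlow v hv) 2)
        rw [← pow_add, ← pow_mul]
        exact pow_le_pow_right₀ hv (by omega)
      calc _ ≤ (2 * n ^ 2 + n) * v ^ (n - 1) * v ^ 2 := by gcongr
        _ = (2 * n ^ 2 + n) * (v ^ (n - 1) * v ^ 2) := by ring
        _ ≤ _ := by gcongr) hV hVB
  simpa [hq] using this

lemma integral_cos_pow_neg_left (n : ℕ) (V : ℝ) :
    ∫ s in (-V)..V, cos (2 * π * s ^ n) = 2 * ∫ s in (0 : ℝ)..V, cos (2 * π * s ^ n) := by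
  have hcont : Continuous fun s : ℝ => cos (2 * π * s ^ n) := by fun_prop
  have h := intervalIntegral.integral_comp_neg (a := 0) (b := V)
    (fun s : ℝ => cos (2 * π * s ^ n))
  have he : ∀ s : ℝ, cos (2 * π * (-s) ^ n) = cos (2 * π * s ^ n) := by
    intro s
    rcases Nat.even_or_odd n with hn | hn
    · rw [hn.neg_pow]
    · rw [hn.neg_pow, mul_neg, Real.cos_neg]
  simp only [he, neg_zero] at h
  rw [← intervalIntegral.integral_add_adjacent_intervals (hcont.intervalIntegrable (-V) 0)
    (hcont.intervalIntegrable 0 V), ← h]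
  ring

lemma re_intervalIntegral {f : ℝ → ℂ} (hf : Continuous f) (a b : ℝ) :
    (∫ v in a..b, f v).re = ∫ v in a..b, (f v).re :=
  (Complex.reCLM.intervalIntegral_comp_comm (hf.intervalIntegrable a b)).symm

/-- A lower bound for the integral of `e(v ^ (n + 1) + r(v))` over long intervals around the
origin, uniform over all polynomials `r` of degree at most `n` with small coefficients. -/
lemma exists_le_re_integral_unitExp_pow_add {n : ℕ} (hn : 1 ≤ n) :
    ∃ c ε V : ℝ, 0 < c ∧ 0 < ε ∧ 1 ≤ V ∧ ∀ r : Polynomial ℝ, r.natDegree ≤ n →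
      (∀ i, |r.coeff i| ≤ ε) → ∀ A B : ℝ, V ≤ A → V ≤ B →
        c ≤ (∫ v in (-A)..B, unitExp (v ^ (n + 1) + r.eval v)).re := by
  have hpi := Real.pi_pos
  obtain ⟨c, hc, hcos⟩ := exists_le_integral_cos_pow hn
  have hn1 : (1 : ℝ) ≤ n := by exact_mod_cast hn
  set K : ℝ := 2 * n ^ 2 + n + 2 with hK
  have hK1 : 1 ≤ K := by nlinarith
  set V : ℝ := 1 + 4 * K / c with hVdef
  have hV1 : 1 ≤ V := by
    have : 0 ≤ 4 * K / c := by positivity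
    linarith
  have hV0 : 0 < V := by linarith
  have hKV : K / V ≤ c / 4 := by
    rw [div_le_iff₀ hV0, hVdef]
    have : c / 4 * (1 + 4 * K / c) = c / 4 + K := by
      field_simp
    linarith
  have h1V : 1 / V ≤ c / 4 := le_trans (by gcongr) hKV
  set ε : ℝ := min (1 / n) (c / (8 * π * (n + 1) * V ^ (n + 1))) with hε
  refine ⟨c / 2, ε, V, by positivity, by positivity, hV1, ?_⟩
  intro r hr hrc A B hA hB
  have hεn : n * ε ≤ 1 := by
    calc n * ε ≤ n * (1 / n) := by gcongr; exact min_le_left _ _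
      _ = 1 := by field_simp
  set f : ℝ → ℂ := fun v => unitExp (v ^ (n + 1) + r.eval v) with hf
  have hfc : Continuous f := continuous_unitExp.comp (by fun_prop)
  have hgc : Continuous fun v : ℝ => unitExp (v ^ (n + 1)) := continuous_unitExp.comp (by fun_prop)
  have hright : ‖∫ v in V..B, f v‖ ≤ c / 4 := by
    have := norm_integral_unitExp_pow_add_le hn (σ := 1) (by simp) hr hrc hεn hV1 hB
    simp only [one_mul] at this
    exact this.trans hKV
  have hleft : ‖∫ v in (-A)..(-V), f v‖ ≤ c / 4 := by
    rw [← intervalIntegral.integral_comp_neg]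
    have := norm_integral_unitExp_pow_add_le hn (σ := (-1) ^ (n + 1)) (by simp)
      (r := r.comp (Polynomial.C (-1) * Polynomial.X)) (by simpa [Polynomial.natDegree_comp] using hr) (ε := ε)
      (fun i => by
        rw [Polynomial.comp_C_mul_X_coeff]
        simpa [abs_mul] using hrc i) hεn hV1 hA
    refine le_trans (le_of_eq ?_) (this.trans hKV)
    congr 2
    ext v
    simp [hf, neg_pow v]
  have hmid : ‖(∫ v in (-V)..V, f v) - ∫ v in (-V)..V, unitExp (v ^ (n + 1))‖ ≤ c / 2 := by
    rw [← intervalIntegral.integral_sub (hfc.intervalIntegrable _ _) (hgc.intervalIntegrable _ _)]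
    have hb : ∀ v ∈ Set.uIoc (-V) V, ‖f v - unitExp (v ^ (n + 1))‖ ≤
        2 * π * ((n + 1) * ε * V ^ n) := by
      intro v hv
      rw [Set.uIoc_of_le (by linarith)] at hv
      refine (norm_unitExp_add_sub_le _ _).trans ?_
      gcongr
      exact abs_eval_le_of_abs_coeff_le hr hrc hV1 (abs_le.mpr ⟨hv.1.le, hv.2⟩)
    refine (intervalIntegral.norm_integral_le_of_norm_le_const hb).trans ?_
    have hεc : ε ≤ c / (8 * π * (n + 1) * V ^ (n + 1)) := min_le_right _ _
    rw [le_div_iff₀ (by positivity)] at hεc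
    rw [abs_of_nonneg (by linarith)]
    have : 2 * π * ((n + 1) * ε * V ^ n) * (V - -V) =
      (ε * (8 * π * (n + 1) * V ^ (n + 1))) / 2 := by ring
    rw [this]
    linarith
  have hmain : 2 * (c - c / 4) ≤ (∫ v in (-V)..V, unitExp (v ^ (n + 1))).re := by
    rw [re_intervalIntegral hgc]
    simp only [re_unitExp]
    rw [integral_cos_pow_neg_left]
    have := hcos V hV1
    linarith
  rw [← intervalIntegral.integral_add_adjacent_intervals (hfc.intervalIntegrable (-A) V)
    (hfc.intervalIntegrable V B), ← intervalIntegral.integral_add_adjacent_intervals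
    (hfc.intervalIntegrable (-A) (-V)) (hfc.intervalIntegrable (-V) V), Complex.add_re,
    Complex.add_re]
  have e1 := (abs_le.mp ((Complex.abs_re_le_norm _).trans hright)).1
  have e2 := (abs_le.mp ((Complex.abs_re_le_norm _).trans hleft)).1
  have e3 := (abs_le.mp ((Complex.abs_re_le_norm _).trans hmid)).1
  rw [Complex.sub_re] at e3
  linarith

lemma abs_eval_le_norm1 (p : Polynomial ℝ) {y : ℝ} (hy : |y| ≤ 1) : |p.eval y| ≤ norm1 p := by
  rw [Polynomial.eval_eq_sum, Polynomial.sum, norm1]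
  refine (Finset.abs_sum_le_sum_abs _ _).trans (Finset.sum_le_sum fun i _ => ?_)
  rw [abs_mul, abs_pow]
  exact mul_le_of_le_one_right (abs_nonneg _) (pow_le_one₀ (abs_nonneg _) hy)

/-- The polynomial `P(u - θ ξ₂ + w, ξ₂; x)` in `u` and `ξ₂`, whose coefficients in `u` are the
polynomials `gam`. -/
def shiftedPhase (k : ℕ) (x : Idx k → ℝ) (θ w : ℝ) : Polynomial (Polynomial ℝ) :=
  ∑ β : Idx k, Polynomial.C (Polynomial.C (x β)) *
    (Polynomial.X - Polynomial.C (Polynomial.C θ * Polynomial.X - Polynomial.C w))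
      ^ (β.1.1 : ℕ) *
    Polynomial.C (Polynomial.X ^ (β.1.2 : ℕ))

lemma gam_eq_coeff (k : ℕ) (x : Idx k → ℝ) (θ w : ℝ) (j : ℕ) :
    gam k x θ w j = (shiftedPhase k x θ w).coeff j := rfl

lemma natDegree_shiftedPhase_le (k : ℕ) (x : Idx k → ℝ) (θ w : ℝ) :
    (shiftedPhase k x θ w).natDegree ≤ k := by
  refine Polynomial.natDegree_sum_le_of_forall_le _ _ fun β _ => ?_
  refine (Polynomial.natDegree_mul_C_le _ _).trans ((Polynomial.natDegree_C_mul_le _ _).trans ?_)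
  rw [(Polynomial.monic_X_sub_C _).natDegree_pow, Polynomial.natDegree_X_sub_C]
  have := β.2.2
  omega

lemma gam_top (k : ℕ) (hk : 1 ≤ k) (x : Idx k → ℝ) (θ w : ℝ) :
    gam k x θ w k = Polynomial.C (x (idxTop k hk)) := by
  rw [gam, Polynomial.finsetSum_coeff, Finset.sum_eq_single (idxTop k hk)]
  · have h := ((Polynomial.monic_X_sub_C
      (Polynomial.C θ * Polynomial.X - Polynomial.C w)).pow k).coeff_natDegree
    rw [(Polynomial.monic_X_sub_C _).natDegree_pow, Polynomial.natDegree_X_sub_C, mul_one] at h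
    rw [Polynomial.coeff_mul_C, Polynomial.coeff_C_mul]
    simp only [idxTop, h, pow_zero, mul_one]
  · intro β _ hβ
    have hlt : (β.1.1 : ℕ) < k := by
      by_contra hcon
      refine hβ (Subtype.ext (Prod.ext (Fin.ext ?_) (Fin.ext ?_)))
      · have := β.2.2
        simp only [idxTop]
        omega
      · have := β.2.2
        simp only [idxTop]
        omega
    rw [Polynomial.coeff_mul_C, Polynomial.coeff_C_mul, Polynomial.coeff_eq_zero_of_natDegree_lt]
    · simp
    · rwa [(Polynomial.monic_X_sub_C _).natDegree_pow, Polynomial.natDegree_X_sub_C, mul_one]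
  · simp

lemma Pphase_eq_sum_gam (k : ℕ) (x : Idx k → ℝ) (θ w : ℝ) (ξ : Fin 2 → ℝ) :
    Pphase k x ξ = ∑ j ∈ Finset.range (k + 1),
      (gam k x θ w j).eval (ξ 1) * (ξ 0 + θ * ξ 1 - w) ^ j := by
  have h1 : Pphase k x ξ =
      ((shiftedPhase k x θ w).eval (Polynomial.C (ξ 0 + θ * ξ 1 - w))).eval (ξ 1) := by
    simp only [Pphase, shiftedPhase, Polynomial.eval_finsetSum]
    refine Finset.sum_congr rfl fun β _ => ?_
    simp
  rw [h1, Polynomial.eval_eq_sum_range' (Nat.lt_succ_of_le (natDegree_shiftedPhase_le k x θ w)),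
    Polynomial.eval_finsetSum]
  simp [gam_eq_coeff]

lemma continuous_Pphase (k : ℕ) (x : Idx k → ℝ) : Continuous (Pphase k x) := by
  unfold Pphase
  fun_prop

lemma continuous_unitExp_Pphase (k : ℕ) (x : Idx k → ℝ) :
    Continuous fun p : ℝ × ℝ => unitExp (Pphase k x ![p.1, p.2]) := by
  refine continuous_unitExp.comp ((continuous_Pphase k x).comp ?_)
  refine continuous_pi fun i => ?_
  fin_cases i
  · exact continuous_fst
  · exact continuous_snd

lemma integrable_unitExp_Pphase (k : ℕ) (x : Idx k → ℝ) :
    Integrable (fun p : ℝ × ℝ => unitExp (Pphase k x ![p.1, p.2]))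
      ((volume.restrict (Icc (0 : ℝ) 1)).prod (volume.restrict (Icc (0 : ℝ) 1))) := by
  rw [Measure.prod_restrict]
  exact (continuous_unitExp_Pphase k x).continuousOn.integrableOn_compact
    (isCompact_Icc.prod isCompact_Icc)

lemma Eone_eq_iterated_integral (k : ℕ) (x : Idx k → ℝ) :
    Eone k x = ∫ y in Icc (0 : ℝ) 1, ∫ t in Icc (0 : ℝ) 1, unitExp (Pphase k x ![t, y]) := by
  have hpre : Icc (0 : Fin 2 → ℝ) 1 =
      (MeasurableEquiv.finTwoArrow : (Fin 2 → ℝ) ≃ᵐ ℝ × ℝ) ⁻¹'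
        (Icc (0 : ℝ) 1 ×ˢ Icc (0 : ℝ) 1) := by
    ext ξ
    simp [Pi.le_def, Fin.forall_fin_two]
  have h := (volume_preserving_finTwoArrow ℝ).setIntegral_preimage_emb
    (MeasurableEquiv.measurableEmbedding _) (fun p : ℝ × ℝ => unitExp (Pphase k x ![p.1, p.2]))
    (Icc (0 : ℝ) 1 ×ˢ Icc (0 : ℝ) 1)
  rw [← hpre, Measure.volume_eq_prod, ← Measure.prod_restrict,
    integral_prod_symm _ (integrable_unitExp_Pphase k x)] at h
  rw [← h, Eone]
  refine integral_congr_ae (Filter.Eventually.of_forall fun ξ => ?_)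
  have hξ : ![ξ 0, ξ 1] = ξ := by
    ext i
    fin_cases i <;> rfl
  simp only [unitExp, MeasurableEquiv.finTwoArrow_apply, hξ]

/-- The integral of `e(P(ξ; x))` over a horizontal segment of the unit square, for `x ∈ Ω`, in the
rescaled variable `v = Λ (ξ₁ + θ ξ₂ - w)`, where `Λ ^ k = x₁`. -/
lemma exists_integral_unitExp_Pphase_eq {n : ℕ} {θ w lam ε : ℝ} (hlam : 0 < lam) (hε : 0 ≤ ε)
    {x : Idx (n + 1) → ℝ} (hx : x ∈ Omegaset (n + 1) (Nat.le_add_left 1 n) θ w lam ε)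
    {L : ℝ} (hL : lam ≤ L) (hLx : L ^ (n + 1) = x (idxTop (n + 1) (Nat.le_add_left 1 n)))
    {y : ℝ} (hy : y ∈ Icc (0 : ℝ) 1) :
    ∃ r : Polynomial ℝ, r.natDegree ≤ n ∧ (∀ i, |r.coeff i| ≤ ε) ∧
      ∫ t in Icc (0 : ℝ) 1, unitExp (Pphase (n + 1) x ![t, y]) =
        unitExp ((gam (n + 1) x θ w 0).eval 0) * ((L⁻¹ : ℝ) *
          ∫ v in (-(L * (w - θ * y)))..(L * (1 + θ * y - w)),
            unitExp (v ^ (n + 1) + r.eval v)) := by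
  obtain ⟨-, -, hmidx, hzero⟩ := hx
  have hL0 : 0 < L := hlam.trans_le hL
  have hy1 : |y| ≤ 1 := abs_le.mpr ⟨by linarith [hy.1], hy.2⟩
  set γ := gam (n + 1) x θ w with hγ
  set b : ℕ → ℝ := fun j => ((γ j).eval y - if j = 0 then (γ 0).eval 0 else 0) / L ^ j with hb
  have hbε : ∀ j ≤ n, |b j| ≤ ε := by
    intro j hj
    rcases Nat.eq_zero_or_pos j with rfl | hj0
    · have := abs_eval_le_norm1 (γ 0 - Polynomial.C ((γ 0).eval 0)) hy1
      simp only [Polynomial.eval_sub, Polynomial.eval_C] at this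
      simpa [hb] using this.trans hzero
    · have h1 := (abs_eval_le_norm1 (γ j) hy1).trans (hmidx j hj0 (by omega))
      have h2 : b j = (γ j).eval y / L ^ j := by simp [hb, hj0.ne']
      rw [h2, abs_div, abs_of_pos (pow_pos hL0 j), div_le_iff₀ (pow_pos hL0 j)]
      exact h1.trans (by gcongr)
  set r : Polynomial ℝ := ∑ j ∈ Finset.range (n + 1), Polynomial.C (b j) * Polynomial.X ^ j with hr
  have hrc : ∀ i, r.coeff i = if i < n + 1 then b i else 0 := by
    intro i
    simp [hr, Polynomial.coeff_X_pow]
  refine ⟨r, ?_, ?_, ?_⟩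
  · rw [Polynomial.natDegree_le_iff_coeff_eq_zero]
    intro i hi
    rw [hrc, if_neg (by omega)]
  · intro i
    rw [hrc]
    split_ifs with hi
    · exact hbε i (by omega)
    · simpa using hε
  have hphase : ∀ t : ℝ, Pphase (n + 1) x ![t, y] = (γ 0).eval 0 +
      ((L * t + L * (θ * y - w)) ^ (n + 1) + r.eval (L * t + L * (θ * y - w))) := by
    intro t
    have hu : L * t + L * (θ * y - w) = L * (t + θ * y - w) := by ring
    rw [Pphase_eq_sum_gam (n + 1) x θ w, Finset.sum_range_succ, gam_top _ (Nat.le_add_left 1 n),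
      hu, mul_pow, hLx]
    have hre : r.eval (L * (t + θ * y - w)) = ∑ j ∈ Finset.range (n + 1),
        ((γ j).eval y - if j = 0 then (γ 0).eval 0 else 0) * (t + θ * y - w) ^ j := by
      rw [hr, Polynomial.eval_finsetSum]
      refine Finset.sum_congr rfl fun j _ => ?_
      have : L ^ j ≠ 0 := by positivity
      simp only [hb, Polynomial.eval_mul, Polynomial.eval_C, Polynomial.eval_pow,
        Polynomial.eval_X, mul_pow]
      field_simp
    rw [hre]
    simp only [sub_mul, Finset.sum_sub_distrib, ite_mul, zero_mul, Finset.sum_ite_eq',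
      Finset.mem_range, Nat.succ_pos, if_true, pow_zero, mul_one, Matrix.cons_val_zero,
      Matrix.cons_val_one, Polynomial.eval_C]
    ring
  simp only [hphase, unitExp_add ((γ 0).eval 0)]
  rw [integral_const_mul, integral_Icc_eq_integral_Ioc,
    ← intervalIntegral.integral_of_le zero_le_one,
    intervalIntegral.integral_comp_mul_add
      (fun v => unitExp (v ^ (n + 1) + r.eval v)) hL0.ne' (L * (θ * y - w)),
    Complex.real_smul]
  congr 4 <;> ring

lemma le_norm_Eone_of_le_re {k : ℕ} {x : Idx k → ℝ} {a s : ℝ}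
    (h : ∀ y ∈ Icc (0 : ℝ) 1,
      a ≤ (unitExp s * ∫ t in Icc (0 : ℝ) 1, unitExp (Pphase k x ![t, y])).re) :
    a ≤ ‖Eone k x‖ := by
  have hint := ((integrable_unitExp_Pphase k x).integral_prod_right).const_mul (unitExp s)
  have hre : (unitExp s * Eone k x).re = ∫ y in Icc (0 : ℝ) 1,
      (unitExp s * ∫ t in Icc (0 : ℝ) 1, unitExp (Pphase k x ![t, y])).re := by
    rw [Eone_eq_iterated_integral, ← integral_const_mul]
    exact (integral_re hint).symm
  have hle : a ≤ (unitExp s * Eone k x).re := by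
    rw [hre]
    have := setIntegral_mono_on (μ := volume) (s := Icc (0 : ℝ) 1) (f := fun _ => a)
      (integrableOn_const (by simp)) hint.re measurableSet_Icc h
    simpa using this
  refine hle.trans ((Complex.re_le_norm _).trans ?_)
  rw [norm_mul, norm_unitExp, one_mul]

/-- Lemma 6.2 (lower bound on the oscillatory integral on `Ω`): for every `k ≥ 2`
there are `ε₀ > 0`, `c > 0` and `λ₀ ≥ 1` such that for every `0 < ε ≤ ε₀`, every
`λ ≥ λ₀`, every `θ ∈ [0, 1/100]`, `w ∈ [1/4, 3/4]` and `x ∈ Ω(θ, w; λ, ε)`,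
`|∫_{[0,1]²} e(P(ξ; x)) dξ| ≥ c/λ`. -/
theorem Omega_oscillatory_lower_bound (k : ℕ) (hk : 2 ≤ k) :
    ∃ ε₀ c lam₀ : ℝ, 0 < ε₀ ∧ 0 < c ∧ 1 ≤ lam₀ ∧
      ∀ ε : ℝ, 0 < ε → ε ≤ ε₀ →
        ∀ lam : ℝ, lam₀ ≤ lam →
          ∀ θ ∈ Icc (0 : ℝ) (1 / 100), ∀ w ∈ Icc (1 / 4 : ℝ) (3 / 4),
            ∀ x ∈ Omegaset k (le_trans one_le_two hk) θ w lam ε,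
              c / lam ≤ ‖Eone k x‖ := by
  obtain ⟨n, rfl⟩ : ∃ n, k = n + 1 := ⟨k - 1, by omega⟩
  obtain ⟨c, ε₀, V, hc, hε₀, hV, hmain⟩ :=
    exists_le_re_integral_unitExp_pow_add (n := n) (by omega)
  refine ⟨ε₀, c / 2, 5 * V, hε₀, by positivity, by linarith, ?_⟩
  intro ε hε hεε lam hlam θ hθ w hw x hx
  have hlam0 : 0 < lam := by linarith
  have hx0 : 0 ≤ x (idxTop (n + 1) (Nat.le_add_left 1 n)) :=
    le_trans (by positivity) hx.1
  obtain ⟨L, hL0, hLx⟩ : ∃ L : ℝ, 0 ≤ L ∧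
      L ^ (n + 1) = x (idxTop (n + 1) (Nat.le_add_left 1 n)) :=
    ⟨_, Real.rpow_nonneg hx0 _, Real.rpow_inv_natCast_pow hx0 (Nat.succ_ne_zero n)⟩
  have hlamL : lam ≤ L := by
    rw [← pow_le_pow_iff_left₀ hlam0.le hL0 (Nat.succ_ne_zero n), Nat.succ_eq_add_one, hLx]
    exact hx.1
  have hL2 : L ≤ 2 * lam := by
    rw [← pow_le_pow_iff_left₀ hL0 (by positivity) (Nat.succ_ne_zero n), Nat.succ_eq_add_one, hLx]
    exact hx.2.1
  have hLpos : 0 < L := hlam0.trans_le hlamL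
  refine le_norm_Eone_of_le_re (s := -(gam (n + 1) x θ w 0).eval 0) fun y hy => ?_
  obtain ⟨r, hr, hrc, heq⟩ := exists_integral_unitExp_Pphase_eq hlam0 hε.le hx hlamL hLx hy
  have hθy0 : 0 ≤ θ * y := mul_nonneg hθ.1 hy.1
  have hθy1 : θ * y ≤ 1 / 100 := (mul_le_of_le_one_right hθ.1 hy.2).trans hθ.2
  have h1 := hmain r hr (fun i => (hrc i).trans hεε) (L * (w - θ * y)) (L * (1 + θ * y - w))
    (by nlinarith [hw.1]) (by nlinarith [hw.2])
  have hunit : unitExp (-(gam (n + 1) x θ w 0).eval 0) * unitExp ((gam (n + 1) x θ w 0).eval 0)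
      = 1 := by
    rw [← unitExp_add]
    simp [unitExp]
  rw [heq, ← mul_assoc, hunit, one_mul, Complex.re_ofReal_mul]
  calc c / 2 / lam = (2 * lam)⁻¹ * c := by field_simp
    _ ≤ L⁻¹ * c := by gcongr
    _ ≤ _ := by gcongr
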